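/- Let 𝒫x be a partition of Ω and S ⊆ Ω nonempty. Then ε_x(D_S) = D_{σ_x(S)}, i.e., C(D_S ∩ L_x) = D_{σ_x(S)}: extraction of the coherent set D_S with respect to 𝒫x corresponds to saturation of S with respect to 𝒫x. -/

import Mathlib

open Set

universe u

/-- The set of gambles on `Ω`: bounded real-valued functions. -/
def Gmb (Ω : Type u) : Set (Ω → ℝ) := {f | ∃ B : ℝ, ∀ ω, |f ω| ≤ B}

/-- `L⁺(Ω)`: non-negative, non-vanishing gambles. -/
def GmbPos (Ω : Type u) : Set (Ω → ℝ) :=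
  {f | f ∈ Gmb Ω ∧ (∀ ω, 0 ≤ f ω) ∧ f ≠ 0}

/-- Coherent set of gambles. -/
def Coherent {Ω : Type u} (D : Set (Ω → ℝ)) : Prop :=
  D ⊆ Gmb Ω ∧ GmbPos Ω ⊆ D ∧ (0 : Ω → ℝ) ∉ D ∧
    (∀ f ∈ D, ∀ g ∈ D, f + g ∈ D) ∧
    (∀ f ∈ D, ∀ c : ℝ, 0 < c → c • f ∈ D)

/-- Maximal coherent set of gambles: no coherent set properly contains it. -/
def MaxCoh {Ω : Type u} (M : Set (Ω → ℝ)) : Prop :=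
  Coherent M ∧ ∀ D : Set (Ω → ℝ), Coherent D → M ⊆ D → D = M

/-- Membership in `Φ(Ω)`: coherent sets together with `L(Ω)`. -/
def PhiMem {Ω : Type u} (D : Set (Ω → ℝ)) : Prop :=
  Coherent D ∨ D = Gmb Ω

/-- The closure operator `C` on sets of gambles. -/
def Cl {Ω : Type u} (A : Set (Ω → ℝ)) : Set (Ω → ℝ) :=
  ⋂₀ {D | PhiMem D ∧ A ⊆ D}

/-- Order on partitions (as equivalence relations): `ple x y` iff `𝒫x ≤ 𝒫y`,
i.e. `y` refines `x`. -/
def ple {Ω : Type u} (x y : Setoid Ω) : Prop := ∀ a b : Ω, y.r a b → x.r a b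

/-- Join of two partitions: the relation is the conjunction. -/
def pjoin {Ω : Type u} (x y : Setoid Ω) : Setoid Ω :=
  ⟨fun a b => x.r a b ∧ y.r a b,
    ⟨fun a => ⟨x.iseqv.refl a, y.iseqv.refl a⟩,
     fun h => ⟨x.iseqv.symm h.1, y.iseqv.symm h.2⟩,
     fun h h' => ⟨x.iseqv.trans h.1 h'.1, y.iseqv.trans h.2 h'.2⟩⟩⟩

/-- Conditional independence of partitions: blocks are equivalence classes,
`B1 ∩ B ≠ ∅` and `B2 ∩ B ≠ ∅` imply `B1 ∩ B2 ∩ B ≠ ∅`. -/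
def CondIndep {Ω : Type u} (p1 p2 p : Setoid Ω) : Prop :=
  ∀ a b c : Ω, (∃ u, p1.r a u ∧ p.r c u) → (∃ v, p2.r b v ∧ p.r c v) →
    ∃ w, p1.r a w ∧ p2.r b w ∧ p.r c w

/-- Saturation operator of a partition. -/
def sat {Ω : Type u} (x : Setoid Ω) (S : Set Ω) : Set Ω :=
  {ω | ∃ ω' ∈ S, x.r ω ω'}

/-- `L_x`: the `x`-measurable gambles. -/
def Meas {Ω : Type u} (x : Setoid Ω) : Set (Ω → ℝ) :=
  {f | f ∈ Gmb Ω ∧ ∀ a b : Ω, x.r a b → f a = f b}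

/-- Extraction operator `ε_x`. -/
def eps {Ω : Type u} (x : Setoid Ω) (D : Set (Ω → ℝ)) : Set (Ω → ℝ) :=
  Cl (D ∩ Meas x)

/-- `At(D)`: maximal coherent sets dominating `D`. -/
def Atoms {Ω : Type u} (D : Set (Ω → ℝ)) : Set (Set (Ω → ℝ)) :=
  {M | MaxCoh M ∧ D ⊆ M}

/-- `D_S`: the coherent set of gambles associated to a set `S ⊆ Ω`. -/
def DS {Ω : Type u} (S : Set Ω) : Set (Ω → ℝ) :=
  {f | f ∈ Gmb Ω ∧ 0 < sInf (f '' S)} ∪ GmbPos Ω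

/-- `posi(K)`: positive linear hull. -/
def posi {Ω : Type u} (K : Set (Ω → ℝ)) : Set (Ω → ℝ) :=
  {g | ∃ r : ℕ, 1 ≤ r ∧ ∃ (lam : Fin r → ℝ) (f : Fin r → (Ω → ℝ)),
    (∀ j, 0 < lam j) ∧ (∀ j, f j ∈ K) ∧ g = ∑ j, lam j • f j}

/-! On an `x`-measurable gamble the infimum over `S` equals the infimum over `sat x S`, so `DS S`
and `DS (sat x S)` contain the same `x`-measurable gambles. Conversely, a gamble with infimum
`d > 0` on `sat x S` and lower bound `-B` dominates the `x`-measurable gamble equal to `d` on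
`sat x S` and to `-B` elsewhere. The latter lies in `DS S`, and every closure `Cl A` is upward
closed among gambles. -/

section Development

open scoped ENNReal Pointwise

variable {Ω : Type u} {f g : Ω → ℝ}

namespace Gmb

theorem mem_iff_memℓp : f ∈ Gmb Ω ↔ Memℓp f ∞ := by
  rw [memℓp_infty_iff, bddAbove_def]
  simp only [forall_mem_range, Real.norm_eq_abs]
  rfl

theorem const_mem (c : ℝ) : (fun _ => c) ∈ Gmb Ω :=
  ⟨|c|, fun _ => le_rfl⟩

theorem add_mem (hf : f ∈ Gmb Ω) (hg : g ∈ Gmb Ω) : f + g ∈ Gmb Ω :=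
  mem_iff_memℓp.2 ((mem_iff_memℓp.1 hf).add (mem_iff_memℓp.1 hg))

theorem sub_mem (hf : f ∈ Gmb Ω) (hg : g ∈ Gmb Ω) : f - g ∈ Gmb Ω :=
  mem_iff_memℓp.2 ((mem_iff_memℓp.1 hf).sub (mem_iff_memℓp.1 hg))

theorem smul_mem (c : ℝ) (hf : f ∈ Gmb Ω) : c • f ∈ Gmb Ω :=
  mem_iff_memℓp.2 ((mem_iff_memℓp.1 hf).const_smul c)

theorem piecewise_mem (T : Set Ω) [DecidablePred (· ∈ T)] (hf : f ∈ Gmb Ω) (hg : g ∈ Gmb Ω) :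
    T.piecewise f g ∈ Gmb Ω := by
  obtain ⟨B, hB⟩ := hf
  obtain ⟨C, hC⟩ := hg
  refine ⟨max B C, fun ω => ?_⟩
  by_cases hω : ω ∈ T
  · rw [piecewise_eq_of_mem T f g hω]
    exact (hB ω).trans (le_max_left B C)
  · rw [piecewise_eq_of_notMem T f g hω]
    exact (hC ω).trans (le_max_right B C)

theorem bddBelow_image (hf : f ∈ Gmb Ω) (S : Set Ω) : BddBelow (f '' S) := by
  obtain ⟨B, hB⟩ := hf
  exact ⟨-B, forall_mem_image.2 fun ω _ => (abs_le.1 (hB ω)).1⟩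

theorem sInf_image_le (hf : f ∈ Gmb Ω) {S : Set Ω} {ω : Ω} (hω : ω ∈ S) : sInf (f '' S) ≤ f ω :=
  csInf_le (bddBelow_image hf S) (mem_image_of_mem f hω)

end Gmb

namespace GmbPos

theorem mem_iff : f ∈ GmbPos Ω ↔ f ∈ Gmb Ω ∧ 0 < f := by
  rw [lt_iff_le_and_ne, ne_comm]
  rfl

theorem mem_of_le (hf : f ∈ GmbPos Ω) (hg : g ∈ Gmb Ω) (hfg : f ≤ g) : g ∈ GmbPos Ω :=
  mem_iff.2 ⟨hg, (mem_iff.1 hf).2.trans_le hfg⟩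

theorem smul_mem {c : ℝ} (hc : 0 < c) (hf : f ∈ GmbPos Ω) : c • f ∈ GmbPos Ω :=
  mem_iff.2 ⟨Gmb.smul_mem c hf.1, smul_pos hc (mem_iff.1 hf).2⟩

end GmbPos

theorem Coherent.mem_of_le {D : Set (Ω → ℝ)} (hD : Coherent D) (hf : f ∈ D) (hg : g ∈ Gmb Ω)
    (hfg : f ≤ g) : g ∈ D := by
  obtain ⟨hDGmb, hPos, -, hAdd, -⟩ := hD
  obtain rfl | hlt := hfg.eq_or_lt
  · exact hf
  · have hdiff : g - f ∈ D :=
      hPos (GmbPos.mem_iff.2 ⟨Gmb.sub_mem hg (hDGmb hf), sub_pos.2 hlt⟩)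
    simpa only [add_sub_cancel] using hAdd f hf (g - f) hdiff

namespace PhiMem

variable {D : Set (Ω → ℝ)}

theorem gmbPos_subset (hD : PhiMem D) : GmbPos Ω ⊆ D := by
  obtain hD | rfl := hD
  · exact hD.2.1
  · exact fun _ hf => hf.1

theorem mem_of_le (hD : PhiMem D) (hf : f ∈ D) (hg : g ∈ Gmb Ω) (hfg : f ≤ g) : g ∈ D := by
  obtain hD | rfl := hD
  · exact hD.mem_of_le hf hg hfg
  · exact hg

end PhiMem

namespace Cl

variable {A D : Set (Ω → ℝ)}

theorem subset_Cl : A ⊆ Cl A :=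
  subset_sInter fun _ hD => hD.2

theorem subset_of_phiMem (hD : PhiMem D) (hAD : A ⊆ D) : Cl A ⊆ D :=
  sInter_subset_of_mem ⟨hD, hAD⟩

theorem gmbPos_subset : GmbPos Ω ⊆ Cl A :=
  subset_sInter fun _ hD => hD.1.gmbPos_subset

theorem mem_of_le (hf : f ∈ Cl A) (hg : g ∈ Gmb Ω) (hfg : f ≤ g) : g ∈ Cl A :=
  fun D hD => hD.1.mem_of_le (hf D hD) hg hfg

end Cl

namespace DS

variable {S : Set Ω}

theorem subset_gmb : DS S ⊆ Gmb Ω :=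
  union_subset (fun _ hf => hf.1) fun _ hf => hf.1

theorem zero_notMem : (0 : Ω → ℝ) ∉ DS S := by
  rintro (⟨-, hpos⟩ | hpos)
  · refine hpos.not_ge (Real.sInf_nonpos ?_)
    exact forall_mem_image.2 fun _ _ => le_rfl
  · exact hpos.2.2 rfl

theorem mem_of_le (hS : S.Nonempty) (hf : f ∈ DS S) (hg : g ∈ Gmb Ω) (hfg : f ≤ g) :
    g ∈ DS S := by
  obtain ⟨hfG, hpos⟩ | hf := hf
  · refine Or.inl ⟨hg, hpos.trans_le (le_csInf (hS.image g) (forall_mem_image.2 fun ω hω => ?_))⟩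
    exact (Gmb.sInf_image_le hfG hω).trans (hfg ω)
  · exact Or.inr (GmbPos.mem_of_le hf hg hfg)

theorem add_mem (hS : S.Nonempty) (hf : f ∈ DS S) (hg : g ∈ DS S) : f + g ∈ DS S := by
  have hfgG : f + g ∈ Gmb Ω := Gmb.add_mem (subset_gmb hf) (subset_gmb hg)
  by_cases hgPos : g ∈ GmbPos Ω
  · exact mem_of_le hS hf hfgG (le_add_of_nonneg_right hgPos.2.1)
  by_cases hfPos : f ∈ GmbPos Ω
  · exact mem_of_le hS hg hfgG (le_add_of_nonneg_left hfPos.2.1)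
  obtain ⟨hfG, hf⟩ := hf.resolve_right hfPos
  obtain ⟨hgG, hg⟩ := hg.resolve_right hgPos
  refine Or.inl ⟨hfgG, (add_pos hf hg).trans_le (le_csInf (hS.image _) ?_)⟩
  exact forall_mem_image.2 fun ω hω =>
    add_le_add (Gmb.sInf_image_le hfG hω) (Gmb.sInf_image_le hgG hω)

theorem smul_mem {c : ℝ} (hc : 0 < c) (hf : f ∈ DS S) : c • f ∈ DS S := by
  obtain ⟨hfG, hpos⟩ | hf := hf
  · refine Or.inl ⟨Gmb.smul_mem c hfG, ?_⟩
    have himage : (c • f) '' S = c • f '' S := image_comp (c • ·) f S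
    rw [himage, Real.sInf_smul_of_nonneg hc.le]
    exact smul_pos hc hpos
  · exact Or.inr (GmbPos.smul_mem hc hf)

theorem coherent (hS : S.Nonempty) : Coherent (DS S) :=
  ⟨subset_gmb, subset_union_right, zero_notMem, fun _ hf _ hg => add_mem hS hf hg,
    fun _ hf _ hc => smul_mem hc hf⟩

end DS

variable {x : Setoid Ω} {S T : Set Ω}

namespace sat

theorem subset_sat : S ⊆ sat x S :=
  fun ω hω => ⟨ω, hω, x.refl ω⟩

theorem mem_congr {a b : Ω} (hab : x.r a b) : a ∈ sat x S ↔ b ∈ sat x S :=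
  exists_congr fun _ => and_congr_right fun _ =>
    ⟨fun ha => x.trans (x.symm hab) ha, fun hb => x.trans hab hb⟩

end sat

namespace Meas

theorem const_mem (c : ℝ) : (fun _ => c) ∈ Meas x :=
  ⟨Gmb.const_mem c, fun _ _ _ => rfl⟩

theorem piecewise_mem [DecidablePred (· ∈ T)] (hT : ∀ a b, x.r a b → (a ∈ T ↔ b ∈ T))
    (hf : f ∈ Meas x) (hg : g ∈ Meas x) : T.piecewise f g ∈ Meas x := by
  refine ⟨Gmb.piecewise_mem T hf.1 hg.1, fun a b hab => ?_⟩
  simp only [piecewise, hT a b hab, hf.2 a b hab, hg.2 a b hab]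

theorem image_sat (hf : f ∈ Meas x) : f '' sat x S = f '' S := by
  refine Subset.antisymm ?_ (image_mono sat.subset_sat)
  rintro _ ⟨ω, ⟨ω', hω', hr⟩, rfl⟩
  exact ⟨ω', hω', (hf.2 ω ω' hr).symm⟩

end Meas

theorem DS.mem_sat_iff (hf : f ∈ Meas x) : f ∈ DS (sat x S) ↔ f ∈ DS S := by
  simp only [DS, mem_union, mem_ofPred_eq, Meas.image_sat hf]

theorem Meas.exists_le_of_sInf_image_sat_pos (hS : S.Nonempty) (hf : f ∈ Gmb Ω)
    (hpos : 0 < sInf (f '' sat x S)) : ∃ g ∈ DS S ∩ Meas x, g ≤ f := by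
  classical
  have ⟨B, hB⟩ := hf
  let g : Ω → ℝ := (sat x S).piecewise (fun _ => sInf (f '' sat x S)) fun _ => -B
  have hg : g ∈ Meas x :=
    piecewise_mem (fun _ _ => sat.mem_congr) (const_mem _) (const_mem _)
  have hgS : g '' S = {sInf (f '' sat x S)} := by
    rw [((piecewise_eqOn _ _ _).mono sat.subset_sat).image_eq, hS.image_const]
  refine ⟨g, ⟨Or.inl ⟨hg.1, ?_⟩, hg⟩, piecewise_le ?_ ?_⟩
  · rwa [hgS, csInf_singleton]
  · exact fun ω hω => Gmb.sInf_image_le hf hω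
  · exact fun ω _ => (abs_le.1 (hB ω)).1

end Development

theorem stmt13 {Ω : Type u} [Nonempty Ω] (x : Setoid Ω) (S : Set Ω) (hS : S.Nonempty) :
    eps x (DS S) = DS (sat x S) := by
  apply Subset.antisymm
  · have hcoh : Coherent (DS (sat x S)) := DS.coherent (hS.mono sat.subset_sat)
    exact Cl.subset_of_phiMem (Or.inl hcoh) fun f hf => (DS.mem_sat_iff hf.2).2 hf.1
  · rintro f (⟨hf, hpos⟩ | hf)
    · obtain ⟨g, hg, hgf⟩ := Meas.exists_le_of_sInf_image_sat_pos hS hf hpos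
      exact Cl.mem_of_le (Cl.subset_Cl hg) hf hgf
    · exact Cl.gmbPos_subset hf
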